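/- arXiv:0801.0056 — 7 statements merged into one kernel-verified Lean document; each statement's English description precedes it below -/
import Mathlib

section
/- For every n ≥ 1, the polynomial Q_{2n}(x) lies in the ℚ-linear span of the polynomials Q_1(x), Q_3(x), …, Q_{2n−1}(x). -/
open Polynomial

/-- Q_n(x) = 2x^n - (x+1)^n - 2(1-x)^n + (-x)^n. -/
noncomputable def Qpoly (n : ℕ) : Polynomial ℚ :=
  2 * X ^ n - (X + 1) ^ n - 2 * (1 - X) ^ n + (-X) ^ n

/-!
The binomial transform sends the powers of `y` to the powers of `1 - y`. The involution
`y ↦ 1 - y` swaps `X` with `1 - X` and `X + 1` with `-X`, and the two members of each pair enter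
`Qpoly` with opposite coefficients, so the transform negates `Qpoly`. For even `n` the `n`-th entry
of this identity expresses `2 * Qpoly n` through the `Qpoly k` with `k < n`; by induction, only the
odd `k` are needed.
-/

section BinomialTransform

variable {G : Type*} [AddCommGroup G]

/-- The binomial transform of sequences in an abelian group, in its self-inverse form: the sign is
`(-1) ^ k` and not `(-1) ^ (n - k)`, so the `n`-th entry is `(-1) ^ n` times the `n`-th forward
difference of `a` at `0`. -/
def binomialTransform : (ℕ → G) →+ (ℕ → G) where
  toFun a n := ∑ k ∈ Finset.range (n + 1), ((-1) ^ k * n.choose k : ℤ) • a k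
  map_zero' := by ext n; simp
  map_add' a b := by ext n; simp [Finset.sum_add_distrib]

theorem binomialTransform_apply (a : ℕ → G) (n : ℕ) :
    binomialTransform a n = ∑ k ∈ Finset.range (n + 1), ((-1) ^ k * n.choose k : ℤ) • a k :=
  rfl

theorem binomialTransform_pow {A : Type*} [Ring A] (y : A) :
    binomialTransform (fun n ↦ y ^ n) = fun n ↦ (1 - y) ^ n := by
  ext n
  calc binomialTransform (fun n ↦ y ^ n) n
      = ∑ k ∈ Finset.range (n + 1), (-y) ^ k * 1 ^ (n - k) * n.choose k := by
        rw [binomialTransform_apply]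
        refine Finset.sum_congr rfl fun k _ ↦ ?_
        simp [neg_pow y, mul_assoc, (n.choose k).cast_comm]
    _ = (-y + 1) ^ n := ((Commute.one_right (-y)).add_pow n).symm
    _ = (1 - y) ^ n := by rw [neg_add_eq_sub]

theorem two_nsmul_of_binomialTransform_eq_neg {a : ℕ → G} (ha : binomialTransform a = -a)
    {n : ℕ} (hn : Even n) :
    2 • a n = -∑ k ∈ Finset.range n, ((-1) ^ k * n.choose k : ℤ) • a k := by
  have hsum : ∑ k ∈ Finset.range n, ((-1) ^ k * n.choose k : ℤ) • a k + a n = -a n := by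
    simpa [binomialTransform_apply, Finset.sum_range_succ, hn.neg_one_pow] using congrFun ha n
  rw [eq_sub_of_add_eq hsum]
  abel

theorem mem_of_binomialTransform_eq_neg {R : Type*} [Ring R] [Module R G]
    (h2 : IsUnit (2 : R)) (N : Submodule R G) {a : ℕ → G} (ha : binomialTransform a = -a)
    (n : ℕ) (hodd : ∀ k ≤ n, Odd k → a k ∈ N) : a n ∈ N := by
  induction n using Nat.strong_induction_on with
  | _ n ih =>
    rcases n.even_or_odd with hn | hn
    · have hlower : ∀ k ∈ Finset.range n, a k ∈ N := fun k hk ↦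
        have hkn : k < n := Finset.mem_range.mp hk
        ih k hkn fun j hj ↦ hodd j (hj.trans hkn.le)
      rw [← N.smul_mem_iff_of_isUnit h2, ofNat_smul_eq_nsmul,
        two_nsmul_of_binomialTransform_eq_neg ha hn]
      exact N.neg_mem (N.sum_mem fun k hk ↦ zsmul_mem (hlower k hk) _)
    · exact hodd n le_rfl hn

end BinomialTransform

theorem binomialTransform_Qpoly : binomialTransform Qpoly = -Qpoly := by
  have hQ : Qpoly =
      2 • (X ^ ·) - ((X + 1) ^ ·) - 2 • ((1 - X) ^ ·) + ((-X) ^ ·) := by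
    ext1 n
    simp [Qpoly]
  have hX : (1 - (X + 1) : ℚ[X]) = -X := by ring
  rw [hQ]
  simp only [map_add, map_sub, map_nsmul, binomialTransform_pow, sub_sub_cancel, hX,
    sub_neg_eq_add, add_comm (1 : ℚ[X]) X]
  abel

/-- For n ≥ 1, Q_{2n} lies in the ℚ-span of Q_1, Q_3, ..., Q_{2n-1}. -/
theorem Qpoly_even_in_span_of_odd (n : ℕ) (hn : 1 ≤ n) :
    Qpoly (2 * n) ∈ Submodule.span ℚ
      {p : Polynomial ℚ | ∃ k, 1 ≤ k ∧ k ≤ n ∧ p = Qpoly (2 * k - 1)} := by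
  refine mem_of_binomialTransform_eq_neg two_ne_zero.isUnit _ binomialTransform_Qpoly _ ?_
  rintro _ hk ⟨m, rfl⟩
  exact Submodule.subset_span ⟨m + 1, by lia, by lia, rfl⟩
end

section
/- For every n ≥ 1, Q_{2n}(0) = −3, the rational function (Q_{2n}(x) + 3)/x is a polynomial Q̂_{2n}(x) of degree 2n−2, and Q̂_{2n} is reciprocal: Q̂_{2n}(x) = x^{2n−2} · Q̂_{2n}(1/x) as polynomials, i.e. its coefficient sequence is palindromic. -/
/-!
As `2n` is even, `Q_{2n} + 3 = 3(x^{2n} + 1) - (x + 1)^{2n} - 2((1 - x)^2)^n`, in which every term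
is reciprocal with respect to the degree `2n`. Its constant term vanishes, hence so does its
coefficient of `x^{2n}`, and dividing by `x` leaves a polynomial reciprocal with respect to the
degree `2n - 2`. The two extreme coefficients of the quotient are both equal to `Q_{2n}'(0) = 2n`,
so its degree is exactly `2n - 2`.
-/

open Polynomial

/-- Reciprocal (palindromic) polynomials with respect to a formal degree `N`, i.e. those with
`p(x) = x^N p(1/x)`. The actual degree may be smaller than `N`, which makes the notion stable under
linear combinations; the bound `natDegree p ≤ N` is needed because `reflect N` does not move
the coefficients beyond `N`. -/
structure IsReciprocal {R : Type*} [Semiring R] (N : ℕ) (p : R[X]) : Prop where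
  natDegree_le : p.natDegree ≤ N
  reflect_eq : p.reflect N = p

section Semiring

variable {R : Type*} [Semiring R] {M N : ℕ} {p q : R[X]}

theorem IsReciprocal.coeff_eq_coeff_sub (hp : IsReciprocal N p) {i : ℕ} (hi : i ≤ N) :
    p.coeff i = p.coeff (N - i) := by
  conv_lhs => rw [← hp.reflect_eq, coeff_reflect, revAt_le hi]

theorem IsReciprocal.C_mul (a : R) (hp : IsReciprocal N p) : IsReciprocal N (C a * p) where
  natDegree_le := (natDegree_C_mul_le a p).trans hp.natDegree_le
  reflect_eq := by rw [reflect_C_mul, hp.reflect_eq]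

theorem IsReciprocal.mul (hp : IsReciprocal M p) (hq : IsReciprocal N q) :
    IsReciprocal (M + N) (p * q) where
  natDegree_le := natDegree_mul_le_of_le hp.natDegree_le hq.natDegree_le
  reflect_eq := by
    rw [reflect_mul p q hp.natDegree_le hq.natDegree_le, hp.reflect_eq, hq.reflect_eq]

theorem isReciprocal_one : IsReciprocal 0 (1 : R[X]) where
  natDegree_le := natDegree_one.le
  reflect_eq := by rw [reflect_one, pow_zero]

theorem IsReciprocal.pow (hp : IsReciprocal N p) (k : ℕ) : IsReciprocal (N * k) (p ^ k) := by
  induction k with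
  | zero => simpa only [mul_zero, pow_zero] using isReciprocal_one
  | succ k ih => simpa only [mul_add_one, pow_succ] using ih.mul hp

theorem isReciprocal_X_pow_add_one (N : ℕ) : IsReciprocal N (X ^ N + 1 : R[X]) where
  natDegree_le := by compute_degree
  reflect_eq := by
    rw [reflect_add, reflect_one, reflect_monomial, revAt_le le_rfl, Nat.sub_self, pow_zero,
      add_comm]

theorem isReciprocal_X_add_one : IsReciprocal 1 (X + 1 : R[X]) := by
  simpa only [pow_one] using isReciprocal_X_pow_add_one 1

theorem IsReciprocal.divX (hp : IsReciprocal (N + 2) p) (h0 : p.coeff 0 = 0) :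
    IsReciprocal N p.divX where
  natDegree_le := by
    have htop : p.coeff (N + 2) = 0 := by rw [hp.coeff_eq_coeff_sub le_rfl, Nat.sub_self, h0]
    refine natDegree_le_iff_coeff_eq_zero.mpr fun i hi => ?_
    rw [coeff_divX]
    obtain rfl | hi' := eq_or_lt_of_le (Nat.succ_le_of_lt hi)
    · exact htop
    · exact coeff_eq_zero_of_natDegree_lt (hp.natDegree_le.trans_lt (by omega))
  reflect_eq := by
    ext i
    obtain hi | hi := le_or_gt i N
    · rw [coeff_reflect, revAt_le hi, coeff_divX, coeff_divX,
        hp.coeff_eq_coeff_sub (show i + 1 ≤ N + 2 by omega),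
        show N + 2 - (i + 1) = N - i + 1 by omega]
    · rw [coeff_reflect, revAt_eq_self_of_lt hi]

theorem IsReciprocal.degree_eq_of_coeff_zero_ne_zero (hp : IsReciprocal N p) (h0 : p.coeff 0 ≠ 0) :
    p.degree = N := by
  refine le_antisymm (degree_le_of_natDegree_le hp.natDegree_le) (le_degree_of_ne_zero ?_)
  rwa [hp.coeff_eq_coeff_sub le_rfl, Nat.sub_self]

end Semiring

section Ring

variable {R : Type*} [Ring R]

theorem IsReciprocal.sub {N : ℕ} {p q : R[X]} (hp : IsReciprocal N p) (hq : IsReciprocal N q) :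
    IsReciprocal N (p - q) where
  natDegree_le := (natDegree_sub_le_of_le hp.natDegree_le hq.natDegree_le).trans_eq (max_self N)
  reflect_eq := by rw [reflect_sub, hp.reflect_eq, hq.reflect_eq]

theorem isReciprocal_one_sub_X_sq : IsReciprocal 2 ((1 - X : R[X]) ^ 2) where
  natDegree_le := by compute_degree
  reflect_eq := by
    have hdeg : (1 - X : R[X]).natDegree ≤ 1 := by compute_degree
    have hreflect : (1 - X : R[X]).reflect 1 = -(1 - X) := by
      rw [reflect_sub, reflect_one, reflect_one_X, pow_one, neg_sub]
    rw [sq, reflect_mul _ _ hdeg hdeg, hreflect, neg_mul_neg]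

end Ring

theorem eval_zero_Qpoly {m : ℕ} (hm : m ≠ 0) : (Qpoly m).eval 0 = -3 := by
  norm_num [Qpoly, hm]

theorem derivative_Qpoly (m : ℕ) :
    derivative (Qpoly m) =
      C (m : ℚ) * (2 * X ^ (m - 1) - (X + 1) ^ (m - 1) + 2 * (1 - X) ^ (m - 1)
        - (-X) ^ (m - 1)) := by
  simp only [Qpoly, derivative_add, derivative_sub, derivative_mul, derivative_pow, derivative_neg,
    derivative_X, derivative_one, derivative_ofNat]
  ring

theorem coeff_one_Qpoly {m : ℕ} (hm : 2 ≤ m) : (Qpoly m).coeff 1 = m := by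
  have hderiv : (derivative (Qpoly m)).eval 0 = m := by
    norm_num [derivative_Qpoly, show m - 1 ≠ 0 by omega]
  rwa [← coeff_zero_eq_eval_zero, coeff_derivative, zero_add, Nat.cast_zero, zero_add,
    mul_one] at hderiv

theorem Qpoly_even_add_three (n : ℕ) :
    Qpoly (2 * n) + 3 = C 3 * (X ^ (2 * n) + 1) - (X + 1) ^ (2 * n) - C 2 * ((1 - X) ^ 2) ^ n := by
  rw [Qpoly, (even_two_mul n).neg_pow, pow_mul (1 - X), C_ofNat, C_ofNat]
  ring

theorem isReciprocal_Qpoly_even_add_three (n : ℕ) : IsReciprocal (2 * n) (Qpoly (2 * n) + 3) := by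
  rw [Qpoly_even_add_three]
  have hadd : IsReciprocal (2 * n) ((X + 1 : ℚ[X]) ^ (2 * n)) := by
    simpa only [one_mul] using isReciprocal_X_add_one.pow (2 * n)
  exact (((isReciprocal_X_pow_add_one _).C_mul 3).sub hadd).sub
    ((isReciprocal_one_sub_X_sq.pow n).C_mul 2)

/-- For n ≥ 1, Q_{2n}(0) = -3, (Q_{2n}(x)+3)/x is a polynomial of degree 2n-2,
    and this polynomial is reciprocal (palindromic coefficients). -/
theorem Qpoly_even_reciprocal (n : ℕ) (hn : 1 ≤ n) :
    (Qpoly (2 * n)).eval 0 = -3 ∧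
    ∃ Qhat : Polynomial ℚ,
      X * Qhat = Qpoly (2 * n) + 3 ∧
      Qhat.degree = (2 * n - 2 : ℕ) ∧
      ∀ i ≤ 2 * n - 2, Qhat.coeff i = Qhat.coeff (2 * n - 2 - i) := by
  have heval : (Qpoly (2 * n)).eval 0 = -3 := eval_zero_Qpoly (by omega)
  have hcoeff_zero : (Qpoly (2 * n) + 3).coeff 0 = 0 := by
    rw [coeff_zero_eq_eval_zero, eval_add, heval, eval_ofNat, neg_add_cancel]
  have hrec : IsReciprocal (2 * n - 2) (Qpoly (2 * n) + 3).divX := by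
    refine IsReciprocal.divX ?_ hcoeff_zero
    rw [Nat.sub_add_cancel (by omega)]
    exact isReciprocal_Qpoly_even_add_three n
  have hdivX_zero : (Qpoly (2 * n) + 3).divX.coeff 0 ≠ 0 := by
    rw [coeff_divX, zero_add, coeff_add, coeff_one_Qpoly (by omega), coeff_ofNat_succ, add_zero]
    exact Nat.cast_ne_zero.mpr (by omega)
  have hmul : X * (Qpoly (2 * n) + 3).divX = Qpoly (2 * n) + 3 := by
    conv_rhs => rw [← X_mul_divX_add (Qpoly (2 * n) + 3), hcoeff_zero, C_0, add_zero]
  exact ⟨heval, (Qpoly (2 * n) + 3).divX, hmul,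
    hrec.degree_eq_of_coeff_zero_ne_zero hdivX_zero, fun _ => hrec.coeff_eq_coeff_sub⟩
end

section
/- For each integer J ≥ 1 there exists a unique sequence of positive real numbers c₁, …, c_J satisfying c₁ = 1/c₁ + c₂ = 1/c₂ + c₃ = ⋯ = 1/c_{J−1} + c_J = 1/c_J (i.e. all J of these expressions are equal to c₁). This sequence is strictly decreasing and is given explicitly by c_j = sin((j+1)π/(J+2)) / sin(jπ/(J+2)) for j = 1, …, J; in particular c₁ = 2cos(π/(J+2)). -/
/-!
A solution is the orbit of its first term `a` under the increasing map `x ↦ a - 1 / x`, so it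
decreases as soon as `a - 1 / a < a`. Increasing `a` increases the whole orbit and decreases
`1 / c J`, so the closing condition `a = 1 / c J` holds for at most one `a`. For ratios of
consecutive sines the recursion is `sin ((j - 1) θ) + sin ((j + 1) θ) = 2 cos θ sin (j θ)`, and with
`θ = π / (J + 2)` the term after the last one is `sin π / sin (π - θ) = 0`, which closes the chain.
-/

/-- The positive solutions of `c 1 = 1 / c 1 + c 2 = ⋯ = 1 / c (J - 1) + c J = 1 / c J`. Only the
values `c 1, …, c J` matter when `1 ≤ J`. -/
structure IsReciprocalChain {K : Type*} [Field K] [LinearOrder K] (J : ℕ) (c : ℕ → K) : Prop where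
  pos : ∀ j, 1 ≤ j → j ≤ J → 0 < c j
  step : ∀ j, 1 ≤ j → j < J → c 1 = 1 / c j + c (j + 1)
  last : c 1 = 1 / c J

namespace IsReciprocalChain

variable {K : Type*} [Field K] [LinearOrder K] [IsStrictOrderedRing K] {J : ℕ} {c d : ℕ → K}

theorem succ_lt (hc : IsReciprocalChain J c) {j : ℕ} (hj : 1 ≤ j) (hjJ : j < J) :
    c (j + 1) < c j := by
  induction j, hj using Nat.le_induction with
  | base => linarith [hc.step 1 le_rfl hjJ, one_div_pos.mpr (hc.pos 1 le_rfl hjJ.le)]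
  | succ j hj ih =>
    have hinv : 1 / c j < 1 / c (j + 1) :=
      one_div_lt_one_div_of_lt (hc.pos (j + 1) (by omega) hjJ.le) (ih (by omega))
    linarith [hc.step j hj (by omega), hc.step (j + 1) (by omega) hjJ]

theorem strictAntiOn (hc : IsReciprocalChain J c) : StrictAntiOn c (Set.Icc 1 J) :=
  strictAntiOn_of_add_one_lt Set.ordConnected_Icc fun _ _ hj hj' =>
    hc.succ_lt hj.1 (Nat.lt_of_succ_le hj'.2)

theorem lt_of_apply_one_lt (hc : IsReciprocalChain J c) (hd : IsReciprocalChain J d)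
    (h : c 1 < d 1) {j : ℕ} (hj : 1 ≤ j) (hjJ : j ≤ J) : c j < d j := by
  induction j, hj using Nat.le_induction with
  | base => exact h
  | succ j hj ih =>
    have hinv : 1 / d j < 1 / c j :=
      one_div_lt_one_div_of_lt (hc.pos j hj (by omega)) (ih (by omega))
    linarith [hc.step j hj hjJ, hd.step j hj hjJ]

theorem apply_one_le (hc : IsReciprocalChain J c) (hd : IsReciprocalChain J d) (hJ : 1 ≤ J) :
    d 1 ≤ c 1 := by
  by_contra! h
  have hinv : 1 / d J < 1 / c J :=
    one_div_lt_one_div_of_lt (hc.pos J hJ le_rfl) (hc.lt_of_apply_one_lt hd h hJ le_rfl)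
  exact lt_asymm h (hd.last.trans_lt (hinv.trans_eq hc.last.symm))

theorem eqOn (hc : IsReciprocalChain J c) (hd : IsReciprocalChain J d) :
    Set.EqOn c d (Set.Icc 1 J) := by
  rintro j ⟨hj, hjJ⟩
  have hone : c 1 = d 1 :=
    le_antisymm (hd.apply_one_le hc (hj.trans hjJ)) (hc.apply_one_le hd (hj.trans hjJ))
  induction j, hj using Nat.le_induction with
  | base => exact hone
  | succ j hj ih =>
    have hj_eq : c j = d j := ih (by omega)
    have hstep : 1 / c j + c (j + 1) = 1 / d j + d (j + 1) := by
      rw [← hc.step j hj hjJ, ← hd.step j hj hjJ, hone]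
    rwa [hj_eq, add_right_inj] at hstep

end IsReciprocalChain

open Real

/-- The ratio `U_j (cos θ) / U_{j-1} (cos θ)` of consecutive Chebyshev polynomials of the second
kind, written with sines. It is `0` where the denominator `sin (j θ)` vanishes, as at `j = 0`. -/
noncomputable def sinRatio (θ : ℝ) (j : ℕ) : ℝ :=
  sin ((j + 1) * θ) / sin (j * θ)

theorem sinRatio_one {θ : ℝ} (hθ : sin θ ≠ 0) : sinRatio θ 1 = 2 * cos θ := by
  rw [sinRatio, Nat.cast_one, one_add_one_eq_two, one_mul, sin_two_mul]
  field_simp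

theorem one_div_sinRatio_add_sinRatio_succ {θ : ℝ} {j : ℕ} (hj : sin ((j + 1) * θ) ≠ 0) :
    1 / sinRatio θ j + sinRatio θ (j + 1) = 2 * cos θ := by
  have hsum : sin (j * θ) + sin ((j + 1 + 1) * θ) = 2 * cos θ * sin ((j + 1) * θ) :=
    calc sin (j * θ) + sin ((j + 1 + 1) * θ)
        = sin ((j + 1) * θ - θ) + sin ((j + 1) * θ + θ) := by ring_nf
      _ = 2 * sin ((j + 1) * θ) * cos θ := (two_mul_sin_mul_cos _ _).symm
      _ = 2 * cos θ * sin ((j + 1) * θ) := mul_right_comm _ _ _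
  rw [sinRatio, sinRatio, one_div_div, Nat.cast_add_one, ← add_div, hsum,
    mul_div_cancel_right₀ _ hj]

theorem sin_natCast_mul_pi_div_pos {j n : ℕ} (hj : 0 < j) (hjn : j < n) :
    0 < sin (j * (π / n)) := by
  have hj' : (0 : ℝ) < j := Nat.cast_pos.mpr hj
  have hjn' : (j : ℝ) < n := Nat.cast_lt.mpr hjn
  have hn : (0 : ℝ) < n := hj'.trans hjn'
  apply sin_pos_of_pos_of_lt_pi (by positivity)
  calc (j : ℝ) * (π / n) < n * (π / n) := by gcongr
    _ = π := mul_div_cancel₀ π hn.ne'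

theorem sinRatio_pi_div_pos {j n : ℕ} (hj : 0 < j) (hjn : j + 1 < n) :
    0 < sinRatio (π / n) j :=
  div_pos (mod_cast sin_natCast_mul_pi_div_pos j.succ_pos hjn)
    (sin_natCast_mul_pi_div_pos hj (by omega))

theorem sinRatio_pi_div_succ (n : ℕ) : sinRatio (π / (n + 1 : ℕ)) n = 0 := by
  have hn : ((n + 1 : ℕ) : ℝ) ≠ 0 := Nat.cast_ne_zero.mpr n.succ_ne_zero
  rw [sinRatio, ← Nat.cast_add_one, mul_div_cancel₀ π hn, sin_pi, zero_div]

theorem isReciprocalChain_sinRatio (J : ℕ) :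
    IsReciprocalChain J (sinRatio (π / (J + 2 : ℕ))) := by
  set θ := π / (J + 2 : ℕ)
  have hsin {j : ℕ} (hj : j ≤ J) : sin ((j + 1) * θ) ≠ 0 :=
    mod_cast (sin_natCast_mul_pi_div_pos j.succ_pos (by omega : j + 1 < J + 2)).ne'
  have hone : sinRatio θ 1 = 2 * cos θ := sinRatio_one (by simpa using hsin J.zero_le)
  have hstep {j : ℕ} (hj : j ≤ J) : sinRatio θ 1 = 1 / sinRatio θ j + sinRatio θ (j + 1) :=
    hone.trans (one_div_sinRatio_add_sinRatio_succ (hsin hj)).symm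
  refine ⟨fun j hj hjJ => sinRatio_pi_div_pos hj (by omega), fun j _ hj => hstep hj.le, ?_⟩
  rw [hstep le_rfl, sinRatio_pi_div_succ (J + 1), add_zero]

/-- For each J ≥ 1 there is a unique sequence of positive reals c₁,…,c_J with
    c₁ = 1/c₁ + c₂ = ⋯ = 1/c_{J-1} + c_J = 1/c_J; it is strictly decreasing and
    c_j = sin((j+1)π/(J+2))/sin(jπ/(J+2)); in particular c₁ = 2cos(π/(J+2)). -/
theorem chebyshev_chain_sequence (J : ℕ) (hJ : 1 ≤ J) :
    ∃ c : ℕ → ℝ,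
      ((∀ j, 1 ≤ j → j ≤ J → 0 < c j) ∧
       (∀ j, 1 ≤ j → j ≤ J - 1 → c 1 = 1 / c j + c (j + 1)) ∧
       c 1 = 1 / c J) ∧
      (∀ j, 1 ≤ j → j ≤ J →
        c j = Real.sin (((j : ℝ) + 1) * Real.pi / ((J : ℝ) + 2)) /
              Real.sin ((j : ℝ) * Real.pi / ((J : ℝ) + 2))) ∧
      c 1 = 2 * Real.cos (Real.pi / ((J : ℝ) + 2)) ∧
      (∀ j k, 1 ≤ j → j < k → k ≤ J → c k < c j) ∧
      (∀ c' : ℕ → ℝ,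
        ((∀ j, 1 ≤ j → j ≤ J → 0 < c' j) ∧
         (∀ j, 1 ≤ j → j ≤ J - 1 → c' 1 = 1 / c' j + c' (j + 1)) ∧
         c' 1 = 1 / c' J) →
        ∀ j, 1 ≤ j → j ≤ J → c' j = c j) := by
  have hchain := isReciprocalChain_sinRatio J
  have hθ : sin (π / (J + 2 : ℕ)) ≠ 0 := by
    simpa using (sin_natCast_mul_pi_div_pos one_pos (by omega : 1 < J + 2)).ne'
  refine ⟨sinRatio (π / (J + 2 : ℕ)),
    ⟨hchain.pos, fun j hj hjJ => hchain.step j hj (by omega), hchain.last⟩, ?_, ?_, ?_, ?_⟩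
  · intro j _ _
    simp only [sinRatio, mul_div_assoc, Nat.cast_add, Nat.cast_ofNat]
  · exact_mod_cast sinRatio_one hθ
  · intro j k hj hjk hkJ
    exact hchain.strictAntiOn ⟨hj, hjk.le.trans hkJ⟩ ⟨hj.trans hjk.le, hkJ⟩ hjk
  · rintro c' ⟨hpos, hstep, hlast⟩ j hj hjJ
    have hc' : IsReciprocalChain J c' := ⟨hpos, fun i hi hiJ => hstep i hi (by omega), hlast⟩
    exact hc'.eqOn hchain ⟨hj, hjJ⟩
end

section
/- Let f : [0,1] → ℂ be continuous and suppose f(x) = Σ_{n=1}^∞ 2^{−n} f(1/(x+n)) for all x ∈ [0,1]. Then f is constant on [0,1]. -/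
open Set

/-!
Let `g = ‖f - f 0‖` attain its maximum over `[0,1]` at `x`. By the triangle inequality `g x` is at
most the weighted average of the values `g (1 / (x + n + 1))`, none of which exceeds `g x`; as all
weights are positive, all these values equal `g x`. The points `1 / (x + n + 1)` accumulate at `0`,
so `max g = g 0 = 0` by continuity.
-/

section WeightedAverage

variable {ι : Type*} {w : ι → ℝ}

theorem eq_of_le_of_hasSum_mul_of_le {a : ι → ℝ} {M A : ℝ} (hw_pos : ∀ i, 0 < w i)
    (hw : HasSum w 1) (ha : ∀ i, a i ≤ M) (hA : HasSum (fun i ↦ w i * a i) A) (hMA : M ≤ A)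
    (i : ι) : a i = M := by
  have hdefect : HasSum (fun i ↦ w i * (M - a i)) (M - A) := by
    simpa only [mul_sub, one_mul] using (hw.mul_right M).sub hA
  have hdefect_nonneg (i : ι) : 0 ≤ w i * (M - a i) :=
    mul_nonneg (hw_pos i).le (sub_nonneg.2 (ha i))
  have hAM : M - A = 0 := (sub_nonpos.2 hMA).antisymm (hdefect.nonneg hdefect_nonneg)
  have hzero : w i * (M - a i) = 0 :=
    congrFun ((hasSum_zero_iff_of_nonneg hdefect_nonneg).1 (hAM ▸ hdefect)) i
  exact (sub_eq_zero.1 ((mul_eq_zero.1 hzero).resolve_left (hw_pos i).ne')).symm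

theorem norm_sub_le_of_hasSum_smul {E : Type*} [SeminormedAddCommGroup E] [NormedSpace ℝ E]
    {v : ι → E} {u c : E} {A : ℝ} (hw_nonneg : ∀ i, 0 ≤ w i) (hw : HasSum w 1)
    (hu : HasSum (fun i ↦ w i • v i) u) (hA : HasSum (fun i ↦ w i * ‖v i - c‖) A) :
    ‖u - c‖ ≤ A := by
  have hsub : HasSum (fun i ↦ w i • (v i - c)) (u - c) := by
    simpa only [smul_sub, one_smul] using hu.sub (hw.smul_const c)
  refine hsub.norm_le_of_bounded hA fun i ↦ ?_
  rw [norm_smul, Real.norm_of_nonneg (hw_nonneg i)]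

variable {X E : Type*} [TopologicalSpace X] {K : Set X}

theorem summable_smul_comp_of_continuousOn [SeminormedAddCommGroup E] [NormedSpace ℝ E]
    [CompleteSpace E] {f : X → E} {y : ι → X} (hK : IsCompact K) (hf : ContinuousOn f K)
    (hw : Summable w) (hy : ∀ i, y i ∈ K) : Summable fun i ↦ w i • f (y i) := by
  obtain ⟨C, hC⟩ := hK.exists_bound_of_continuousOn hf
  refine (hw.norm.mul_right C).of_norm_bounded fun i ↦ ?_
  rw [norm_smul]
  exact mul_le_mul_of_nonneg_left (hC _ (hy i)) (norm_nonneg _)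

theorem eq_of_isMaxOn_of_le_hasSum_of_mem_closure_range {g : X → ℝ} {x p : X} {y : ι → X} {A : ℝ}
    (hw_pos : ∀ i, 0 < w i) (hw : HasSum w 1) (hmax : IsMaxOn g K x) (hy : ∀ i, y i ∈ K)
    (hA : HasSum (fun i ↦ w i * g (y i)) A) (hle : g x ≤ A) (hp : p ∈ closure (range y))
    (hg : ContinuousWithinAt g K p) : g p = g x := by
  have hgy : ∀ i, g (y i) = g x :=
    eq_of_le_of_hasSum_mul_of_le hw_pos hw (fun i ↦ hmax (hy i)) hA hle
  have hmaps : MapsTo g (range y) {g x} := forall_mem_range.2 hgy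
  have hmem : g p ∈ closure {g x} :=
    (hg.mono (range_subset_iff.2 hy)).mem_closure hp hmaps
  rwa [closure_singleton] at hmem

theorem eq_of_hasSum_smul_comp_of_mem_closure_range [NormedAddCommGroup E] [NormedSpace ℝ E]
    {φ : ι → X → X} {p : X} {f : X → E} (hK : IsCompact K) (hw_pos : ∀ i, 0 < w i)
    (hw : HasSum w 1) (hφ : ∀ i, MapsTo (φ i) K K) (hpK : p ∈ K)
    (hp : ∀ x ∈ K, p ∈ closure (range fun i ↦ φ i x)) (hf : ContinuousOn f K)
    (hfix : ∀ x ∈ K, HasSum (fun i ↦ w i • f (φ i x)) (f x)) {x : X} (hx : x ∈ K) :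
    f x = f p := by
  have hg : ContinuousOn (fun z ↦ ‖f z - f p‖) K := (hf.sub continuousOn_const).norm
  obtain ⟨m, hm, hmax⟩ := hK.exists_isMaxOn ⟨p, hpK⟩ hg
  have havg : HasSum (fun i ↦ w i * ‖f (φ i m) - f p‖) (∑' i, w i * ‖f (φ i m) - f p‖) :=
    (summable_smul_comp_of_continuousOn hK hg hw.summable fun i ↦ hφ i hm).hasSum
  have hsub : ‖f m - f p‖ ≤ ∑' i, w i * ‖f (φ i m) - f p‖ :=
    norm_sub_le_of_hasSum_smul (fun i ↦ (hw_pos i).le) hw (hfix m hm) havg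
  have hmax_eq : ‖f p - f p‖ = ‖f m - f p‖ :=
    eq_of_isMaxOn_of_le_hasSum_of_mem_closure_range (g := fun z ↦ ‖f z - f p‖) hw_pos hw hmax
      (fun i ↦ hφ i hm) havg hsub (hp m hm) (hg p hpK)
  have hnorm_le : ‖f x - f p‖ ≤ 0 :=
    calc ‖f x - f p‖ ≤ ‖f m - f p‖ := hmax hx
      _ = 0 := by rw [← hmax_eq, sub_self, norm_zero]
  exact sub_eq_zero.1 (norm_le_zero_iff.1 hnorm_le)

end WeightedAverage

theorem mapsTo_one_div_add_natCast_add_one_Icc (n : ℕ) :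
    MapsTo (fun x : ℝ ↦ 1 / (x + n + 1)) (Icc 0 1) (Icc 0 1) := by
  rintro x ⟨hx, -⟩
  refine ⟨by positivity, div_le_one_of_le₀ ?_ (by positivity)⟩
  linarith [n.cast_nonneg (α := ℝ)]

theorem zero_mem_closure_range_one_div_add_natCast_add_one (x : ℝ) :
    (0 : ℝ) ∈ closure (range fun n : ℕ ↦ 1 / (x + n + 1)) := by
  have hden : Filter.Tendsto (fun n : ℕ ↦ x + n + 1) Filter.atTop Filter.atTop :=
    Filter.tendsto_atTop_add_const_right _ _
      (Filter.tendsto_atTop_add_const_left _ _ tendsto_natCast_atTop_atTop)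
  exact mem_closure_of_tendsto (hden.const_div_atTop 1) (.of_forall mem_range_self)

theorem hasSum_inv_two_pow_succ : HasSum (fun n : ℕ ↦ (2 : ℝ)⁻¹ ^ (n + 1)) 1 := by
  simpa only [pow_succ', inv_pow, one_div, div_eq_mul_inv, one_mul] using hasSum_geometric_two' 1

theorem hasSum_of_eq_tsum_inv_two_pow_mul {f : ℝ → ℂ} {x : ℝ} (hf : ContinuousOn f (Icc 0 1))
    (hx : x ∈ Icc (0 : ℝ) 1)
    (heq : f x = ∑' n : ℕ, (2 : ℂ)⁻¹ ^ (n + 1) * f (1 / (x + n + 1))) :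
    HasSum (fun n : ℕ ↦ (2 : ℝ)⁻¹ ^ (n + 1) • f (1 / (x + n + 1))) (f x) := by
  have hsummable := summable_smul_comp_of_continuousOn isCompact_Icc hf
    hasSum_inv_two_pow_succ.summable fun n ↦ mapsTo_one_div_add_natCast_add_one_Icc n hx
  rw [heq]
  simpa only [Complex.real_smul, Complex.ofReal_pow, Complex.ofReal_inv, Complex.ofReal_ofNat]
    using hsummable.hasSum

theorem fixed_points_of_transfer_are_constant_general {E : Type*} [NormedAddCommGroup E]
    [NormedSpace ℝ E] {w : ℕ → ℝ} (hw_pos : ∀ n, 0 < w n) (hw : HasSum w 1) {f : ℝ → E}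
    (hf : ContinuousOn f (Icc 0 1))
    (hfix : ∀ x ∈ Icc (0 : ℝ) 1, HasSum (fun n : ℕ ↦ w n • f (1 / (x + n + 1))) (f x)) :
    ∃ c : E, ∀ x ∈ Icc (0 : ℝ) 1, f x = c :=
  ⟨f 0, fun _ ↦ eq_of_hasSum_smul_comp_of_mem_closure_range isCompact_Icc hw_pos hw
    mapsTo_one_div_add_natCast_add_one_Icc (left_mem_Icc.2 zero_le_one)
    (fun x _ ↦ zero_mem_closure_range_one_div_add_natCast_add_one x) hf hfix⟩

/-- A continuous f : [0,1] → ℂ with f(x) = Σ_{n≥1} 2^{-n} f(1/(x+n)) on [0,1]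
    is constant on [0,1]. -/
theorem fixed_points_of_transfer_are_constant
    (f : ℝ → ℂ) (hf : ContinuousOn f (Icc 0 1))
    (heq : ∀ x ∈ Icc (0:ℝ) 1,
      f x = ∑' n : ℕ, ((2:ℂ))⁻¹ ^ (n + 1) * f (1 / (x + n + 1))) :
    ∃ c : ℂ, ∀ x ∈ Icc (0:ℝ) 1, f x = c :=
  fixed_points_of_transfer_are_constant_general (fun _ ↦ by positivity) hasSum_inv_two_pow_succ hf
    fun x hx ↦ hasSum_of_eq_tsum_inv_two_pow_mul hf hx (heq x hx)
end

section
/- For each integer n ≥ 1 there exists a unique monic polynomial P_n of degree n satisfying the functional equation 2·P_n(1−2y) − P_n(1−y) = (1/δ_n)·P_n(y) identically in y, where δ_n = (−1)^n/(2^{n+1}−1). For example P₁(y) = y − 1/4 and P₂(y) = y² − (3/5)y + 1/15. -/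
open Polynomial

/-- P is a monic polynomial of degree n satisfying
    2·P(1-2y) - P(1-y) = (-1)^n (2^{n+1}-1) · P(y). -/
def PProp (n : ℕ) (P : Polynomial ℚ) : Prop :=
  P.Monic ∧ P.natDegree = n ∧
    2 * P.comp (1 - 2 * X) - P.comp (1 - X) =
      C ((-1) ^ n * (2 ^ (n + 1) - 1) : ℚ) * P

/-!
The operator `P(y) ↦ 2 P(1 - 2y) - P(1 - y)` is triangular for the filtration of the polynomials by
degree, with diagonal entries `2 (-2)^k - (-1)^k = (-1)^k (2^(k+1) - 1)`. These are pairwise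
distinct, so subtracting the `n`-th of them leaves an operator `S` that is invertible on polynomials
of degree less than `n` and maps `y^n` to such a polynomial. Hence exactly one `r` of degree less
than `n` solves `S r = -S(y^n)`, that is, `S(y^n + r) = 0`.
-/

/-- `T` is triangular with diagonal entries `d 0, d 1, …` for the ascending filtration
`F 0 ⊆ F 1 ⊆ …`: it acts on the quotient `F (k + 1) / F k` as multiplication by `d k`. -/
def IsTriangular {R M : Type*} [Ring R] [AddCommGroup M] [Module R M] (F : ℕ → Submodule R M)
    (T : M →ₗ[R] M) (d : ℕ → R) : Prop :=
  ∀ k, ∀ x ∈ F (k + 1), T x - d k • x ∈ F k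

namespace IsTriangular

variable {R M : Type*} [Ring R] [AddCommGroup M] [Module R M] {F : ℕ → Submodule R M}
  {T T' : M →ₗ[R] M} {d d' : ℕ → R}

theorem id : IsTriangular F (LinearMap.id : M →ₗ[R] M) 1 := fun k x _ => by simp

theorem sub (hT : IsTriangular F T d) (hT' : IsTriangular F T' d') :
    IsTriangular F (T - T') (d - d') := fun k x hx => by
  convert (F k).sub_mem (hT k x hx) (hT' k x hx) using 1
  simp only [LinearMap.sub_apply, Pi.sub_apply, sub_smul]
  abel

theorem const_smul {R M : Type*} [CommRing R] [AddCommGroup M] [Module R M]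
    {F : ℕ → Submodule R M} {T : M →ₗ[R] M} {d : ℕ → R} (hT : IsTriangular F T d) (c : R) :
    IsTriangular F (c • T) (c • d) :=
  fun k x hx => by
    simpa only [LinearMap.smul_apply, Pi.smul_apply, smul_sub, smul_assoc]
      using (F k).smul_mem c (hT k x hx)

theorem injOn (hT : IsTriangular F T d) (hF₀ : F 0 = ⊥) {n : ℕ} (hd : ∀ k < n, IsUnit (d k)) :
    Set.InjOn T (F n) := by
  suffices hker : ∀ x ∈ F n, T x = 0 → x = 0 from fun x hx y hy hxy =>
    sub_eq_zero.1 <| hker _ ((F n).sub_mem hx hy) <| by rw [map_sub, hxy, sub_self]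
  induction n with
  | zero => simp [hF₀]
  | succ n ih =>
    intro x hx hTx
    have hdx : d n • x ∈ F n := by simpa [hTx] using hT n x hx
    have hxn : x ∈ F n := ((F n).smul_mem_iff_of_isUnit (hd n n.lt_succ_self)).1 hdx
    exact ih (fun k hk => hd k (hk.trans n.lt_succ_self)) x hxn hTx

theorem surjOn (hT : IsTriangular F T d) (hF : Monotone F) (hF₀ : F 0 = ⊥) {n : ℕ}
    (hd : ∀ k < n, IsUnit (d k)) : Set.SurjOn T (F n) (F n) := by
  induction n with
  | zero => simp [hF₀, Set.SurjOn]
  | succ n ih =>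
    intro y hy
    obtain ⟨u, hu⟩ := hd n n.lt_succ_self
    set x : M := (↑u⁻¹ : R) • y
    have hx : x ∈ F (n + 1) := (F (n + 1)).smul_mem _ hy
    have hdx : d n • x = y := by rw [← hu, smul_smul, Units.mul_inv, one_smul]
    have hrest : y - T x ∈ F n := by
      simpa only [hdx, neg_sub] using (F n).neg_mem (hT n x hx)
    obtain ⟨z, hz, hTz⟩ := ih (fun k hk => hd k (hk.trans n.lt_succ_self)) hrest
    exact ⟨x + z, (F (n + 1)).add_mem hx (hF n.le_succ hz), by rw [map_add, hTz]; abel⟩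

end IsTriangular

theorem isMonicOfDegree_iff_sub_X_pow_mem_degreeLT {R : Type*} [Ring R] [Nontrivial R] {P : R[X]}
    {n : ℕ} :
    IsMonicOfDegree P n ↔ P - X ^ n ∈ degreeLT R n := by
  rw [isMonicOfDegree_iff, natDegree_le_iff_coeff_eq_zero, mem_degreeLT, degree_lt_iff_coeff_zero]
  constructor
  · rintro ⟨hgt, hn⟩ k hk
    rcases hk.eq_or_lt with rfl | hk
    · simp [hn]
    · simp [hgt k hk, coeff_X_pow, hk.ne']
  · intro h
    refine ⟨fun k hk => ?_, ?_⟩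
    · simpa [coeff_X_pow, hk.ne'] using h k hk.le
    · simpa [sub_eq_zero] using h n le_rfl

theorem coeff_comp_mul_of_natDegree_le {R : Type*} [Semiring R] {p q : R[X]} {m n : ℕ}
    (hn : n ≠ 0) (hp : p.natDegree ≤ m) (hq : q.natDegree ≤ n) :
    (p.comp q).coeff (m * n) = p.coeff m * q.coeff n ^ m := by
  have hsum : p.comp q = ∑ i ∈ Finset.range (m + 1), C (p.coeff i) * q ^ i :=
    eval₂_eq_sum_range' C (Nat.lt_succ_of_le hp) q
  have hlow : ∀ i ∈ Finset.range m, (C (p.coeff i) * q ^ i).coeff (m * n) = 0 := fun i hi =>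
    coeff_eq_zero_of_natDegree_lt <| calc
      (C (p.coeff i) * q ^ i).natDegree ≤ i * n :=
        (natDegree_C_mul_le _ _).trans (natDegree_pow_le_of_le i hq)
      _ < m * n := Nat.mul_lt_mul_of_pos_right (Finset.mem_range.1 hi) hn.bot_lt
  rw [hsum, finsetSum_coeff, Finset.sum_range_succ, Finset.sum_eq_zero hlow, zero_add,
    coeff_C_mul, coeff_pow_of_natDegree_le hq]

theorem isTriangular_comp_linear {R : Type*} [CommRing R] (a b : R) :
    IsTriangular (degreeLT R) (aeval (C a * X + C b)).toLinearMap (a ^ ·) := by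
  intro m p hp
  have hpm : p.natDegree ≤ m := by
    rwa [degreeLT_succ_eq_degreeLE, mem_degreeLE, ← natDegree_le_iff_degree_le] at hp
  have hq : (C a * X + C b).natDegree ≤ 1 := natDegree_linear_le
  rw [AlgHom.toLinearMap_apply, ← comp_eq_aeval, mem_degreeLT, degree_lt_iff_coeff_zero]
  intro k hk
  rw [coeff_sub, coeff_smul, smul_eq_mul]
  rcases hk.eq_or_lt with rfl | hk
  · have hlead := coeff_comp_mul_of_natDegree_le one_ne_zero hpm hq
    simp only [mul_one] at hlead
    have hcoeff : (C a * X + C b).coeff 1 = a := by simp [coeff_C]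
    rw [hlead, hcoeff, mul_comm, sub_self]
  · have hcomp : (p.comp (C a * X + C b)).natDegree < k :=
      (natDegree_comp_le.trans (Nat.mul_le_mul hpm hq)).trans_lt (by rwa [mul_one])
    rw [coeff_eq_zero_of_natDegree_lt hcomp, coeff_eq_zero_of_natDegree_lt (hpm.trans_lt hk),
      mul_zero, sub_zero]

theorem IsTriangular.existsUnique_isMonicOfDegree_eigenvector {R : Type*} [CommRing R]
    [Nontrivial R] {T : R[X] →ₗ[R] R[X]} {d : ℕ → R} (hT : IsTriangular (degreeLT R) T d) {n : ℕ}
    (hd : ∀ k < n, IsUnit (d k - d n)) : ∃! P : R[X], IsMonicOfDegree P n ∧ T P = d n • P := by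
  set S : R[X] →ₗ[R] R[X] := T - d n • LinearMap.id with hS_def
  have hS : IsTriangular (degreeLT R) S (d - d n • 1) := hT.sub (IsTriangular.id.const_smul _)
  have hker (P : R[X]) : T P = d n • P ↔ S P = 0 := by simp [hS_def, sub_eq_zero]
  have hSX : S (X ^ n) ∈ degreeLT R n := by
    have hX : (X ^ n : R[X]) ∈ degreeLT R (n + 1) :=
      mem_degreeLT.2 <| (degree_X_pow_le n).trans_lt <| by exact_mod_cast n.lt_succ_self
    simpa using hS n _ hX
  have hbot : degreeLT R 0 = ⊥ := by ext; simp [mem_degreeLT]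
  have hunit : ∀ k < n, IsUnit ((d - d n • 1) k) := by simpa using hd
  obtain ⟨r, hr, hSr⟩ :=
    hS.surjOn (fun _ _ => degreeLT_mono) hbot hunit ((degreeLT R n).neg_mem hSX)
  simp only [isMonicOfDegree_iff_sub_X_pow_mem_degreeLT, hker]
  refine ⟨X ^ n + r, ⟨by simpa using hr, by rw [map_add, hSr, add_neg_cancel]⟩, ?_⟩
  rintro Q ⟨hQ, hSQ⟩
  have hQr : Q - X ^ n = r := hS.injOn hbot hunit hQ hr <| by rw [map_sub, hSQ, hSr, zero_sub]
  rw [← hQr, add_sub_cancel]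

/-- The eigenvalue `1 / δ_n` of the functional equation in degree `n`, in an arbitrary ring. -/
def eigenvalue (R : Type*) [Ring R] (n : ℕ) : R :=
  (-1) ^ n * (2 ^ (n + 1) - 1)

theorem map_eigenvalue {R S : Type*} [Ring R] [Ring S] (f : R →+* S) (n : ℕ) :
    f (eigenvalue R n) = eigenvalue S n := by
  simp only [eigenvalue, map_mul, map_sub, map_pow, map_neg, map_one, map_ofNat]

theorem abs_eigenvalue {R : Type*} [Ring R] [LinearOrder R] [IsStrictOrderedRing R] (n : ℕ) :
    |eigenvalue R n| = 2 ^ (n + 1) - 1 := by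
  have hpos : (0 : R) ≤ 2 ^ (n + 1) - 1 := sub_nonneg.2 (one_le_pow₀ one_le_two)
  rw [eigenvalue, abs_mul, abs_neg_one_pow, one_mul, abs_of_nonneg hpos]

theorem eigenvalue_injective {R : Type*} [Ring R] [LinearOrder R] [IsStrictOrderedRing R] :
    Function.Injective (eigenvalue R) := fun m n h => by
  have hpow : (2 : R) ^ (m + 1) = 2 ^ (n + 1) := by
    simpa only [abs_eigenvalue, sub_left_inj] using congrArg abs h
  exact Nat.succ_injective (pow_right_injective₀ two_pos one_lt_two.ne' hpow)

theorem isUnit_eigenvalue_sub {R : Type*} [Ring R] [Algebra ℚ R] {m n : ℕ} (h : m ≠ n) :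
    IsUnit (eigenvalue R m - eigenvalue R n) := by
  have hne : eigenvalue ℚ m - eigenvalue ℚ n ≠ 0 := sub_ne_zero.2 (eigenvalue_injective.ne h)
  simpa only [map_sub, map_eigenvalue] using hne.isUnit.map (algebraMap ℚ R)

section Eigenpolynomial

variable {R : Type*} [CommRing R]

/-- The notion `PProp` of the monic polynomial `P_n`, with coefficients in any commutative ring. -/
def IsEigenpolynomial (n : ℕ) (P : R[X]) : Prop :=
  P.Monic ∧ P.natDegree = n ∧
    2 * P.comp (1 - 2 * X) - P.comp (1 - X) = C (eigenvalue R n) * P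

variable (R) in
/-- The operator `P(y) ↦ 2 P(1 - 2y) - P(1 - y)` of the functional equation, with the inner affine
maps written as `a y + b`. -/
noncomputable def reflectionOperator : R[X] →ₗ[R] R[X] :=
  (2 : R) • (aeval (C (-2) * X + C 1)).toLinearMap - (aeval (C (-1) * X + C 1)).toLinearMap

theorem isTriangular_reflectionOperator :
    IsTriangular (degreeLT R) (reflectionOperator R) (eigenvalue R) := by
  have hdiag : eigenvalue R = (2 : R) • ((-2) ^ · : ℕ → R) - ((-1) ^ · : ℕ → R) := by
    funext k
    simp only [eigenvalue, Pi.sub_apply, Pi.smul_apply, smul_eq_mul, neg_pow (2 : R), pow_succ]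
    ring
  rw [hdiag]
  exact ((isTriangular_comp_linear (-2) 1).const_smul 2).sub (isTriangular_comp_linear (-1) 1)

theorem isEigenpolynomial_iff {n : ℕ} {P : R[X]} :
    IsEigenpolynomial n P ↔
      IsMonicOfDegree P n ∧ reflectionOperator R P = eigenvalue R n • P := by
  have hdouble : (1 - 2 * X : R[X]) = C (-2) * X + C 1 := by
    simp only [map_neg, map_ofNat, map_one]; ring
  have hreflect : (1 - X : R[X]) = C (-1) * X + C 1 := by simp only [map_neg, map_one]; ring
  have hop : reflectionOperator R P = 2 * P.comp (1 - 2 * X) - P.comp (1 - X) := by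
    simp only [reflectionOperator, LinearMap.sub_apply, LinearMap.smul_apply,
      AlgHom.toLinearMap_apply, ← comp_eq_aeval, hdouble, hreflect, smul_eq_C_mul, map_ofNat]
  rw [IsEigenpolynomial, isMonicOfDegree_iff', hop, smul_eq_C_mul, and_left_comm, and_assoc]

theorem existsUnique_isEigenpolynomial [Nontrivial R] [Algebra ℚ R] (n : ℕ) :
    ∃! P : R[X], IsEigenpolynomial n P := by
  simpa only [isEigenpolynomial_iff] using
    isTriangular_reflectionOperator.existsUnique_isMonicOfDegree_eigenvector
      fun _ hk => isUnit_eigenvalue_sub hk.ne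

theorem isEigenpolynomial_one [Nontrivial R] {a : R} (ha : 4 * a = 1) :
    IsEigenpolynomial 1 (X - C a) := by
  refine ⟨monic_X_sub_C a, natDegree_X_sub_C a, ?_⟩
  have hCa : 4 * C a = 1 := by simpa only [map_mul, map_ofNat, map_one] using congrArg C ha
  simp only [eigenvalue, sub_comp, X_comp, C_comp, map_mul, map_sub, map_pow, map_neg, map_one,
    map_ofNat]
  linear_combination -hCa

theorem isEigenpolynomial_two [Nontrivial R] {a b : R} (ha : 5 * a = 3) (hb : 15 * b = 1) :
    IsEigenpolynomial 2 (X ^ 2 - C a * X + C b) := by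
  refine ⟨by monicity!, by compute_degree!, ?_⟩
  have hCa : 5 * C a = 3 := by simpa only [map_mul, map_ofNat, map_one] using congrArg C ha
  have hCb : 15 * C b = 1 := by simpa only [map_mul, map_ofNat, map_one] using congrArg C hb
  simp only [eigenvalue, add_comp, sub_comp, mul_comp, pow_comp, X_comp, C_comp, map_mul, map_sub,
    map_pow, map_neg, map_one, map_ofNat]
  linear_combination (2 * X - 3 * C b) * hCa + (C a - 1) * hCb

end Eigenpolynomial

theorem eigenpolynomials_exist_unique_general (R : Type*) [CommRing R] [Nontrivial R]
    [Algebra ℚ R] :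
    (∀ n : ℕ, ∃! P : R[X], IsEigenpolynomial n P) ∧
    IsEigenpolynomial 1 (X - C (algebraMap ℚ R (1 / 4))) ∧
    IsEigenpolynomial 2
      (X ^ 2 - C (algebraMap ℚ R (3 / 5)) * X + C (algebraMap ℚ R (1 / 15))) := by
  have clear_denom (k m : ℕ) (q : ℚ) (h : k * q = m) : (k : R) * algebraMap ℚ R q = m := by
    simpa using congrArg (algebraMap ℚ R) h
  refine ⟨existsUnique_isEigenpolynomial, isEigenpolynomial_one ?_, isEigenpolynomial_two ?_ ?_⟩
  · exact_mod_cast clear_denom 4 1 (1 / 4) (by norm_num)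
  · exact_mod_cast clear_denom 5 3 (3 / 5) (by norm_num)
  · exact_mod_cast clear_denom 15 1 (1 / 15) (by norm_num)

/-- For each n ≥ 1 there is a unique monic polynomial P_n of degree n with
    2P_n(1-2y) - P_n(1-y) = (1/δ_n) P_n(y), δ_n = (-1)^n/(2^{n+1}-1);
    e.g. P₁ = y - 1/4 and P₂ = y² - (3/5)y + 1/15. -/
theorem eigenpolynomials_exist_unique :
    (∀ n : ℕ, 1 ≤ n → ∃! P : Polynomial ℚ, PProp n P) ∧
    PProp 1 (X - C (1/4 : ℚ)) ∧
    PProp 2 (X ^ 2 - C (3/5 : ℚ) * X + C (1/15 : ℚ)) :=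
  have ⟨existsUnique, one, two⟩ := eigenpolynomials_exist_unique_general ℚ
  ⟨fun n _ => existsUnique n, one, two⟩
end

section
/- Let n ≥ 1 and let P_n be the unique monic polynomial of degree n with 2·P_n(1−2y) − P_n(1−y) = (−1)^n(2^{n+1}−1)·P_n(y). Then the function x ↦ P_n(F(x)) on [0,1] is an eigenfunction of the transfer operator S with eigenvalue δ_n = (−1)^n/(2^{n+1}−1): for all x ∈ [0,1], Σ_{k=1}^∞ 2^{−k} P_n(F(1/(x+k))) = δ_n · P_n(F(x)). -/
open MeasureTheory Set Filter Polynomial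

/-!
Reflection `F (1 / x) = 1 - F x` turns the nodes of the transfer operator into a geometric sequence:
`F (1 / (x + k)) = 2⁻ᵏ u` with `u = 1 - F x`. At `y = 2⁻ᵏ u` the functional equation of `φ`
expresses `2⁻ᵏ φ (2⁻ᵏ u)` as a multiple of `bₖ₋₁ - bₖ` with `bₖ = 2⁻ᵏ φ (1 - 2⁻ᵏ u)`, so the series
telescopes to a multiple of `b₀ = φ (F x)`.
-/

/-- `F` agrees on `[0, ∞)` with the Minkowski question mark distribution function. The functional
equations say that `F` is a fixed point of a `1/2`-contraction for the supremum norm, so boundedness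
replaces monotonicity and continuity in singling it out; values at negative reals are arbitrary. -/
structure IsMinkowskiQuestionMark (F : ℝ → ℝ) : Prop where
  two_mul_of_one_le : ∀ x : ℝ, 1 ≤ x → 2 * F x = F (x - 1) + 1
  two_mul_of_lt_one : ∀ x : ℝ, 0 ≤ x → x < 1 → 2 * F x = F (x / (1 - x))
  exists_abs_le : ∃ M, ∀ x : ℝ, 0 ≤ x → |F x| ≤ M

namespace IsMinkowskiQuestionMark

variable {F : ℝ → ℝ} {x : ℝ}

theorem of_monotoneOn (hmono : MonotoneOn F (Ici 0))
    (h1 : ∀ x : ℝ, 1 ≤ x → 2 * F x = F (x - 1) + 1)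
    (h2 : ∀ x : ℝ, 0 ≤ x → x < 1 → 2 * F x = F (x / (1 - x))) :
    IsMinkowskiQuestionMark F := by
  refine ⟨h1, h2, 1, fun x hx => abs_le.2 ?_⟩
  have F_zero : 2 * F 0 = F 0 := by simpa using h2 0 le_rfl one_pos
  have F_zero_le : F 0 ≤ F x := hmono self_mem_Ici hx hx
  have F_le_shift : F x ≤ F (x + 1) := hmono hx (by simp only [mem_Ici]; linarith) (by linarith)
  have F_shift : 2 * F (x + 1) = F x + 1 := by simpa using h1 (x + 1) (by linarith)
  constructor <;> linarith

theorem apply_zero (hF : IsMinkowskiQuestionMark F) : F 0 = 0 := by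
  have h : 2 * F 0 = F 0 := by simpa using hF.two_mul_of_lt_one 0 le_rfl one_pos
  linarith

theorem apply_one (hF : IsMinkowskiQuestionMark F) : F 1 = 1 / 2 := by
  have h : 2 * F 1 = F 0 + 1 := by simpa using hF.two_mul_of_one_le 1 le_rfl
  linarith [hF.apply_zero]

theorem two_mul_apply_one_div (hF : IsMinkowskiQuestionMark F) (hx : 1 < x) :
    2 * F (1 / x) = F (1 / (x - 1)) := by
  have hx₀ : 0 < x := one_pos.trans hx
  have hx₁ : x - 1 ≠ 0 := (sub_pos.2 hx).ne'
  have h := hF.two_mul_of_lt_one (1 / x) (by positivity) ((div_lt_one hx₀).2 hx)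
  rwa [show 1 / x / (1 - 1 / x) = 1 / (x - 1) by field_simp] at h

theorem abs_reflection_defect_le_half (hF : IsMinkowskiQuestionMark F) {M : ℝ}
    (hM : ∀ x : ℝ, 0 < x → |F x + F (1 / x) - 1| ≤ M) (hx : 0 < x) :
    |F x + F (1 / x) - 1| ≤ M / 2 := by
  have bound_of_one_lt : ∀ y : ℝ, 1 < y → |F y + F (1 / y) - 1| ≤ M / 2 := by
    intro y hy
    have halving : F y + F (1 / y) - 1 = (F (y - 1) + F (1 / (y - 1)) - 1) / 2 := by
      linarith [hF.two_mul_of_one_le y hy.le, hF.two_mul_apply_one_div hy]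
    rw [halving, abs_div, abs_two]
    gcongr
    exact hM _ (sub_pos.2 hy)
  rcases lt_trichotomy x 1 with hlt | rfl | hgt
  · simpa [add_comm] using bound_of_one_lt (1 / x) ((one_lt_div hx).2 hlt)
  · have M_nonneg : 0 ≤ M := (abs_nonneg _).trans (hM 1 one_pos)
    have defect_one : F 1 + F (1 / 1) - 1 = 0 := by norm_num [hF.apply_one]
    rw [defect_one, abs_zero]
    positivity
  · exact bound_of_one_lt x hgt

theorem apply_one_div (hF : IsMinkowskiQuestionMark F) (hx : 0 < x) : F (1 / x) = 1 - F x := by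
  let defect : Ioi (0 : ℝ) → ℝ := fun y => |F y + F (1 / y) - 1|
  have bddAbove_defect : BddAbove (range defect) := by
    obtain ⟨M, hM⟩ := hF.exists_abs_le
    refine ⟨M + M + 1, forall_mem_range.2 fun ⟨y, hy⟩ => ?_⟩
    have hFy := abs_le.1 (hM y (le_of_lt hy))
    have hFinv := abs_le.1 (hM (1 / y) (one_div_pos.2 hy).le)
    exact abs_le.2 ⟨by linarith, by linarith⟩
  have iSup_le_half : ⨆ y, defect y ≤ (⨆ y, defect y) / 2 :=
    ciSup_le fun y => hF.abs_reflection_defect_le_half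
      (fun z hz => le_ciSup bddAbove_defect ⟨z, hz⟩) y.2
  have defect_le_iSup : |F x + F (1 / x) - 1| ≤ ⨆ y, defect y :=
    le_ciSup bddAbove_defect ⟨x, hx⟩
  have defect_eq_zero : F x + F (1 / x) - 1 = 0 := abs_nonpos_iff.1 (by linarith)
  linarith

theorem apply_add_natCast (hF : IsMinkowskiQuestionMark F) (hx : 0 ≤ x) (k : ℕ) :
    F (x + k) = 1 - (2 : ℝ)⁻¹ ^ k * (1 - F x) := by
  induction k with
  | zero => simp
  | succ k ih =>
    have hk : 1 ≤ x + (k + 1 : ℕ) := by push_cast; linarith [k.cast_nonneg (α := ℝ)]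
    have h := hF.two_mul_of_one_le _ hk
    rw [show x + (k + 1 : ℕ) - 1 = x + k by push_cast; ring, ih] at h
    rw [pow_succ]
    linarith

theorem apply_one_div_add_natCast_add_one (hF : IsMinkowskiQuestionMark F) (hx : 0 ≤ x) (k : ℕ) :
    F (1 / (x + k + 1)) = (2 : ℝ)⁻¹ ^ (k + 1) * (1 - F x) := by
  have h := hF.apply_add_natCast hx (k + 1)
  push_cast at h
  rw [hF.apply_one_div (by positivity), add_assoc, h]
  ring

end IsMinkowskiQuestionMark

section Telescoping

variable {E : Type*} [SeminormedAddCommGroup E]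

theorem hasSum_sub_succ_of_summable_norm {b : ℕ → E} (hb : Summable fun k => ‖b k‖) :
    HasSum (fun k => b k - b (k + 1)) (b 0) := by
  have tendsto_zero : Tendsto b atTop (nhds 0) :=
    tendsto_zero_iff_norm_tendsto_zero.2 hb.tendsto_atTop_zero
  have summable_norm_sub : Summable fun k => ‖b k - b (k + 1)‖ :=
    .of_nonneg_of_le (fun _ => norm_nonneg _) (fun _ => norm_sub_le _ _)
      (hb.add ((summable_nat_add_iff 1).2 hb))
  rw [hasSum_iff_tendsto_nat_of_summable_norm summable_norm_sub]
  simpa only [Finset.sum_range_sub', sub_zero] using tendsto_zero.const_sub (b 0)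

variable [NormedSpace ℝ E] {φ : ℝ → E}

theorem summable_norm_geometric_smul_comp {r : ℝ} (hr₀ : 0 ≤ r) (hr₁ : r < 1) {a : ℝ}
    (hφ : ContinuousAt φ a) (u : ℝ) :
    Summable fun k : ℕ => ‖r ^ k • φ (a - r ^ k * u)‖ := by
  have nodes_tendsto : Tendsto (fun k : ℕ => a - r ^ k * u) atTop (nhds a) := by
    simpa using ((tendsto_pow_atTop_nhds_zero_of_lt_one hr₀ hr₁).mul_const u).const_sub a
  refine summable_of_isBigO_nat (summable_geometric_of_lt_one hr₀ hr₁) ?_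
  simpa using ((Asymptotics.isBigO_refl (fun k : ℕ => r ^ k) atTop).smul
    ((hφ.tendsto.comp nodes_tendsto).isBigO_one ℝ)).norm_left

theorem hasSum_dyadic_of_functional_equation (hφ : ContinuousAt φ 1) {δ : ℝ}
    (hfe : ∀ y, φ y = δ • ((2 : ℝ) • φ (1 - 2 * y) - φ (1 - y))) (u : ℝ) :
    HasSum (fun k : ℕ => (2 : ℝ)⁻¹ ^ (k + 1) • φ ((2 : ℝ)⁻¹ ^ (k + 1) * u)) (δ • φ (1 - u)) := by
  let b : ℕ → E := fun k => (2 : ℝ)⁻¹ ^ k • φ (1 - (2 : ℝ)⁻¹ ^ k * u)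
  have term_eq : ∀ k : ℕ,
      (2 : ℝ)⁻¹ ^ (k + 1) • φ ((2 : ℝ)⁻¹ ^ (k + 1) * u) = δ • (b k - b (k + 1)) := by
    intro k
    have double : (2 : ℝ) * ((2 : ℝ)⁻¹ ^ (k + 1) * u) = (2 : ℝ)⁻¹ ^ k * u := by ring
    rw [hfe, double]
    simp only [b]
    module
  have telescope : HasSum (fun k => b k - b (k + 1)) (b 0) :=
    hasSum_sub_succ_of_summable_norm
      (summable_norm_geometric_smul_comp (by norm_num) (by norm_num) hφ u)
  simpa only [← term_eq, b, pow_zero, one_smul, one_mul] using telescope.const_smul δ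

end Telescoping

theorem inv_neg_one_pow_mul {K : Type*} [Field K] (n : ℕ) (a : K) :
    ((-1) ^ n * a)⁻¹ = (-1) ^ n / a := by
  rw [mul_inv, ← inv_pow, inv_neg_one, div_eq_mul_inv]

theorem eval_eq_inv_mul_of_comp_sub_comp {K : Type*} [Field K] {P : Polynomial K} {c : K}
    (hc : c ≠ 0) (hfe : 2 * P.comp (1 - 2 * X) - P.comp (1 - X) = C c * P) (y : K) :
    P.eval y = c⁻¹ * (2 * P.eval (1 - 2 * y) - P.eval (1 - y)) := by
  have h : 2 * P.eval (1 - 2 * y) - P.eval (1 - y) = c * P.eval y := by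
    simpa [eval_comp] using congrArg (eval y) hfe
  rw [h, inv_mul_cancel_left₀ hc]

theorem eigenfunction_of_transfer_general {E : Type*} [SeminormedAddCommGroup E] [NormedSpace ℝ E]
    {F : ℝ → ℝ} (hF : IsMinkowskiQuestionMark F) {φ : ℝ → E} (hφ : ContinuousAt φ 1) {δ : ℝ}
    (hfe : ∀ y, φ y = δ • ((2 : ℝ) • φ (1 - 2 * y) - φ (1 - y))) {x : ℝ} (hx : 0 ≤ x) :
    HasSum (fun k : ℕ => (2 : ℝ)⁻¹ ^ (k + 1) • φ (F (1 / (x + k + 1)))) (δ • φ (F x)) := by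
  simpa only [hF.apply_one_div_add_natCast_add_one hx, sub_sub_cancel] using
    hasSum_dyadic_of_functional_equation hφ hfe (1 - F x)

/-- If P_n is the monic degree-n polynomial with
    2P_n(1-2y) - P_n(1-y) = (-1)^n(2^{n+1}-1)P_n(y), then P_n ∘ F is an
    eigenfunction of the transfer operator with eigenvalue (-1)^n/(2^{n+1}-1). -/
theorem eigenfunction_of_transfer
    (F : ℝ → ℝ) (hm : Monotone F) (hc : Continuous F)
    (hneg : ∀ x : ℝ, x ≤ 0 → F x = 0)
    (h1 : ∀ x : ℝ, 1 ≤ x → 2 * F x = F (x - 1) + 1)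
    (h2 : ∀ x : ℝ, 0 ≤ x → x < 1 → 2 * F x = F (x / (1 - x)))
    (hlim : Tendsto F atTop (nhds 1))
    (n : ℕ) (hn : 1 ≤ n) (P : Polynomial ℝ)
    (hmonic : P.Monic) (hdeg : P.natDegree = n)
    (hfe : 2 * P.comp (1 - 2 * X) - P.comp (1 - X) =
      C ((-1) ^ n * (2 ^ (n + 1) - 1) : ℝ) * P) :
    ∀ x ∈ Icc (0:ℝ) 1,
      ∑' k : ℕ, ((2:ℝ))⁻¹ ^ (k + 1) * P.eval (F (1 / (x + k + 1))) =
        ((-1) ^ n / (2 ^ (n + 1) - 1)) * P.eval (F x) := by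
  intro x hx
  have hne : (-1 : ℝ) ^ n * (2 ^ (n + 1) - 1) ≠ 0 :=
    mul_ne_zero (by simp) (sub_pos.2 (one_lt_pow₀ one_lt_two n.succ_ne_zero)).ne'
  rw [← inv_neg_one_pow_mul]
  exact (eigenfunction_of_transfer_general (.of_monotoneOn (hm.monotoneOn _) h1 h2)
    P.continuous.continuousAt (eval_eq_inv_mul_of_comp_sub_comp hne hfe) hx.1).tsum_eq
end

section
/- Let λ ∈ ℝ∖{0,−1} and let G_λ : (−∞,0] → ℂ be continuous and bounded, satisfying 2·G_λ(z+1) = G_λ(z) + (1/(λz²))·G_λ(1/z) for all z < 0. Then (λ/(λ+1))·∫₀¹ G_λ(−x) dx = ∫₀¹ G_λ(−x)·F(x) dx. -/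
open MeasureTheory Set Filter

/-! With `P x = (1 - F x) G(-x)` and `Q x = F x G(-x)`, the symmetry `F x + F x⁻¹ = 1` turns the
three-term equation for `G` into `lam (P (x - 1) - P x) = x⁻² Q x⁻¹` for `x > 1`. Integrated over
`(1, ∞)`, the left side telescopes and the right side becomes an integral under `u = x⁻¹`, so that
`lam ∫₀¹ P = ∫₀¹ Q`; the identity follows because `P + Q = G(-·)`. -/

section IntegralsOverRays

variable {E : Type*} [NormedAddCommGroup E]

theorem integrableOn_Ioi_comp_sub_right {f : ℝ → E} {a : ℝ} (hf : IntegrableOn f (Ioi a)) (c : ℝ) :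
    IntegrableOn (fun x => f (x - c)) (Ioi (a + c)) := by
  have h := ((measurePreserving_sub_right volume c).integrableOn_comp_preimage
    (measurableEmbedding_subRight c)).mpr hf
  rwa [preimage_sub_const_Ioi] at h

variable [NormedSpace ℝ E]

theorem integral_Ioi_comp_sub_right_sub {f : ℝ → E} {a c : ℝ} (hf : IntegrableOn f (Ioi a))
    (hc : 0 ≤ c) : ∫ x in Ioi (a + c), (f (x - c) - f x) = ∫ x in a..a + c, f x := by
  have hle : a ≤ a + c := le_add_of_nonneg_right hc
  have hshift : ∫ x in Ioi (a + c), f (x - c) = ∫ x in Ioi a, f x := by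
    have h := (measurePreserving_sub_right volume c).setIntegral_preimage_emb
      (measurableEmbedding_subRight c) f (Ioi a)
    rwa [preimage_sub_const_Ioi] at h
  rw [integral_sub (integrableOn_Ioi_comp_sub_right hf c) (hf.mono_set (Ioi_subset_Ioi hle)),
    hshift, intervalIntegral.integral_Ioi_sub_Ioi hf hle]

theorem hasDerivWithinAt_inv_Ioi {a : ℝ} (ha : 0 < a) :
    ∀ x ∈ Ioi a, HasDerivWithinAt (fun x : ℝ => x⁻¹) (-(x ^ 2)⁻¹) (Ioi a) x :=
  fun _ hx => (hasDerivAt_inv (ha.trans hx).ne').hasDerivWithinAt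

theorem integral_Ioi_comp_inv {a : ℝ} (ha : 0 < a) (f : ℝ → E) :
    ∫ x in Ioi a, (x ^ 2)⁻¹ • f x⁻¹ = ∫ x in Ioo 0 a⁻¹, f x := by
  have h := integral_image_eq_integral_abs_deriv_smul measurableSet_Ioi
    (hasDerivWithinAt_inv_Ioi ha) inv_injective.injOn f
  simpa only [image_inv_eq_inv, inv_Ioi₀ ha, abs_neg, abs_inv, abs_sq] using h.symm

theorem integrableOn_Ioi_comp_inv_iff {a : ℝ} (ha : 0 < a) {f : ℝ → E} :
    IntegrableOn (fun x => (x ^ 2)⁻¹ • f x⁻¹) (Ioi a) ↔ IntegrableOn f (Ioo 0 a⁻¹) := by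
  have h := integrableOn_image_iff_integrableOn_abs_deriv_smul measurableSet_Ioi
    (hasDerivWithinAt_inv_Ioi ha) inv_injective.injOn f
  simpa only [image_inv_eq_inv, inv_Ioi₀ ha, abs_neg, abs_inv, abs_sq] using h.symm

end IntegralsOverRays

/-- `F` is the Minkowski question mark distribution function on `[0, ∞)`, described by
monotonicity and its two functional equations; the values of `F` on the negative half-line are
left free. -/
structure IsQuestionMarkDistribution (F : ℝ → ℝ) : Prop where
  monotoneOn : MonotoneOn F (Ici 0)
  two_mul_of_one_le : ∀ x, 1 ≤ x → 2 * F x = F (x - 1) + 1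
  two_mul_of_lt_one : ∀ x, 0 ≤ x → x < 1 → 2 * F x = F (x / (1 - x))

namespace IsQuestionMarkDistribution

variable {F : ℝ → ℝ} (hF : IsQuestionMarkDistribution F)
include hF

theorem map_zero : F 0 = 0 := by
  have h := hF.two_mul_of_lt_one 0 le_rfl one_pos
  rw [zero_div] at h
  linarith

theorem nonneg {x : ℝ} (hx : 0 ≤ x) : 0 ≤ F x :=
  hF.map_zero ▸ hF.monotoneOn self_mem_Ici hx hx

theorem one_sub_map_natCast (n : ℕ) : 1 - F n = (1 / 2) ^ n := by
  induction n with
  | zero => simp [hF.map_zero]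
  | succ n ih =>
    have h := hF.two_mul_of_one_le (n + 1) (by linarith [n.cast_nonneg (α := ℝ)])
    rw [add_sub_cancel_right] at h
    push_cast
    rw [pow_succ, ← ih]
    linarith

theorem le_one {x : ℝ} (hx : 0 ≤ x) : F x ≤ 1 := by
  have hceil : F x ≤ F ⌈x⌉₊ := hF.monotoneOn hx (mem_Ici.mpr (Nat.cast_nonneg _)) (Nat.le_ceil x)
  have hpow : (0 : ℝ) ≤ (1 / 2) ^ ⌈x⌉₊ := by positivity
  linarith [hF.one_sub_map_natCast ⌈x⌉₊]

theorem one_sub_le_two_mul_exp {x : ℝ} (hx : 0 ≤ x) :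
    1 - F x ≤ 2 * Real.exp (-Real.log 2 * x) := calc
  1 - F x ≤ 1 - F ⌊x⌋₊ :=
    sub_le_sub_left (hF.monotoneOn (mem_Ici.mpr (Nat.cast_nonneg _)) hx (Nat.floor_le hx)) 1
  _ = Real.exp (-Real.log 2 * ⌊x⌋₊) := by
    rw [hF.one_sub_map_natCast, mul_comm, Real.exp_nat_mul, Real.exp_neg,
      Real.exp_log two_pos, one_div]
  _ ≤ Real.exp (Real.log 2 + -Real.log 2 * x) := by
    gcongr
    nlinarith [Real.log_pos one_lt_two, Nat.lt_floor_add_one x]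
  _ = 2 * Real.exp (-Real.log 2 * x) := by rw [Real.exp_add, Real.exp_log two_pos]

theorem integrableOn_one_sub : IntegrableOn (fun x => 1 - F x) (Ioi 0) := by
  have hmeas : AEStronglyMeasurable F (volume.restrict (Ioi 0)) :=
    (aemeasurable_restrict_of_monotoneOn measurableSet_Ioi
      (hF.monotoneOn.mono Ioi_subset_Ici_self)).aestronglyMeasurable
  refine ((exp_neg_integrableOn_Ioi 0 (Real.log_pos one_lt_two)).const_mul 2).mono'
    (aestronglyMeasurable_const.sub hmeas) (ae_restrict_of_forall_mem measurableSet_Ioi ?_)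
  intro x hx
  rw [Real.norm_of_nonneg (sub_nonneg.mpr (hF.le_one hx.le))]
  exact hF.one_sub_le_two_mul_exp hx.le

theorem two_mul_add_map_inv_sub_one {x : ℝ} (hx : 1 < x) :
    2 * (F x + F x⁻¹ - 1) = F (x - 1) + F (x - 1)⁻¹ - 1 := by
  have hx0 : 0 < x := one_pos.trans hx
  have hinv := hF.two_mul_of_lt_one x⁻¹ (inv_nonneg.mpr hx0.le) (inv_lt_one_of_one_lt₀ hx)
  have harg : x⁻¹ / (1 - x⁻¹) = (x - 1)⁻¹ := by
    have := sub_ne_zero.mpr hx.ne'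
    field_simp
  rw [harg] at hinv
  linarith [hF.two_mul_of_one_le x hx.le]

theorem abs_add_map_inv_sub_one_le (n : ℕ) {x : ℝ} (hx : 0 < x) :
    |F x + F x⁻¹ - 1| ≤ (1 / 2) ^ n := by
  induction n generalizing x with
  | zero =>
    have hx' : 0 ≤ x⁻¹ := inv_nonneg.mpr hx.le
    rw [pow_zero, abs_le]
    constructor <;> linarith [hF.nonneg hx.le, hF.nonneg hx', hF.le_one hx.le, hF.le_one hx']
  | succ n ih =>
    wlog h1x : 1 ≤ x generalizing x
    · have h := this (inv_pos.mpr hx) (one_le_inv_iff₀.mpr ⟨hx, (not_le.mp h1x).le⟩)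
      rwa [inv_inv, add_comm (F x⁻¹)] at h
    obtain rfl | h1x := h1x.eq_or_lt
    · have h := hF.one_sub_map_natCast 1
      rw [Nat.cast_one, pow_one] at h
      rw [inv_one, show F 1 + F 1 - 1 = 0 by linarith, abs_zero]
      positivity
    · have h := ih (sub_pos.mpr h1x)
      rw [← hF.two_mul_add_map_inv_sub_one h1x, abs_mul, abs_two] at h
      rw [pow_succ]
      linarith

theorem add_map_inv {x : ℝ} (hx : 0 < x) : F x + F x⁻¹ = 1 := by
  have hpow : Tendsto (fun n : ℕ => (1 / 2 : ℝ) ^ n) atTop (nhds 0) :=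
    tendsto_pow_atTop_nhds_zero_of_lt_one (by norm_num) (by norm_num)
  have h := ge_of_tendsto' hpow fun n => hF.abs_add_map_inv_sub_one_le n hx
  linarith [abs_nonpos_iff.mp h]

end IsQuestionMarkDistribution

section ThreeTermEquation

variable {𝕜 E : Type*} [NormedField 𝕜] [NormedAddCommGroup E] [NormedSpace ℝ E] [NormedSpace 𝕜 E]
  {F : ℝ → ℝ} {lam : 𝕜} {G : ℝ → E}

/-- The three-term functional equation of an eigenfunction, with eigenvalue `lam`, of the transfer
operator attached to the question mark function. It is cleared of the denominator `lam`, so that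
`lam = 0` is not a division by zero. -/
def SatisfiesThreeTermEquation (lam : 𝕜) (G : ℝ → E) : Prop :=
  ∀ z < 0, lam • ((2 : ℝ) • G (z + 1) - G z) = (z ^ 2)⁻¹ • G z⁻¹

theorem IsQuestionMarkDistribution.integrableOn_one_sub_smul (hF : IsQuestionMarkDistribution F)
    (hGc : ContinuousOn G (Iic 0)) {C : ℝ} (hGb : ∀ z ≤ 0, ‖G z‖ ≤ C) :
    IntegrableOn (fun x => (1 - F x) • G (-x)) (Ioi 0) := by
  have hcont : ContinuousOn (fun x => G (-x)) (Ioi 0) :=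
    hGc.comp continuousOn_neg fun x (hx : 0 < x) => mem_Iic.mpr (neg_nonpos.mpr hx.le)
  exact hF.integrableOn_one_sub.smul_bdd C (hcont.aestronglyMeasurable measurableSet_Ioi)
    (ae_restrict_of_forall_mem measurableSet_Ioi fun x hx => hGb _ (neg_nonpos.mpr hx.le))

theorem satisfiesThreeTermEquation_iff_of_ne_zero (hlam : lam ≠ 0) :
    SatisfiesThreeTermEquation lam G ↔
      ∀ z < 0, (2 : ℝ) • G (z + 1) = G z + lam⁻¹ • (z ^ 2)⁻¹ • G z⁻¹ := by
  refine forall₂_congr fun z _ => ?_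
  rw [← eq_inv_smul_iff₀ hlam, sub_eq_iff_eq_add']

variable [SMulCommClass ℝ 𝕜 E]

namespace SatisfiesThreeTermEquation

theorem smul_one_sub_smul_sub (hG : SatisfiesThreeTermEquation lam G)
    (hF : IsQuestionMarkDistribution F) {x : ℝ} (hx : 1 < x) :
    lam • ((1 - F (x - 1)) • G (-(x - 1)) - (1 - F x) • G (-x)) =
      (x ^ 2)⁻¹ • F x⁻¹ • G (-x⁻¹) := by
  have hx0 : 0 < x := one_pos.trans hx
  have hstep : 1 - F (x - 1) = (1 - F x) * 2 := by linarith [hF.two_mul_of_one_le x hx.le]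
  have hinv : F x⁻¹ = 1 - F x := by linarith [hF.add_map_inv hx0]
  have hGx := hG (-x) (neg_lt_zero.mpr hx0)
  rw [neg_sq, inv_neg] at hGx
  rw [hstep, hinv, mul_smul, ← smul_sub, ← smul_comm (1 - F x) lam, neg_sub', sub_neg_eq_add,
    hGx, smul_comm]

variable (hG : SatisfiesThreeTermEquation lam G) (hF : IsQuestionMarkDistribution F)
  (hint : IntegrableOn (fun x => (1 - F x) • G (-x)) (Ioi 0))
include hG hF hint

theorem integrableOn_smul : IntegrableOn (fun x => F x • G (-x)) (Ioo 0 1) := by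
  have hshift := integrableOn_Ioi_comp_sub_right hint 1
  rw [zero_add] at hshift
  have hdiff := (hshift.sub (hint.mono_set (Ioi_subset_Ioi zero_le_one))).smul lam
  rw [← inv_one, ← integrableOn_Ioi_comp_inv_iff one_pos]
  exact IntegrableOn.congr_fun hdiff (fun x hx => hG.smul_one_sub_smul_sub hF hx) measurableSet_Ioi

theorem smul_integral_one_sub_smul :
    lam • ∫ x in (0 : ℝ)..1, (1 - F x) • G (-x) = ∫ x in (0 : ℝ)..1, F x • G (-x) := by
  have htelescope := integral_Ioi_comp_sub_right_sub hint zero_le_one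
  rw [zero_add] at htelescope
  calc lam • ∫ x in (0 : ℝ)..1, (1 - F x) • G (-x)
      = ∫ x in Ioi 1, lam • ((1 - F (x - 1)) • G (-(x - 1)) - (1 - F x) • G (-x)) := by
        rw [← htelescope, integral_smul]
    _ = ∫ x in Ioi 1, (x ^ 2)⁻¹ • F x⁻¹ • G (-x⁻¹) :=
        setIntegral_congr_fun measurableSet_Ioi fun x hx => hG.smul_one_sub_smul_sub hF hx
    _ = ∫ x in (0 : ℝ)..1, F x • G (-x) := by
        rw [integral_Ioi_comp_inv one_pos fun x => F x • G (-x), inv_one,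
          intervalIntegral.integral_of_le zero_le_one, integral_Ioc_eq_integral_Ioo]

theorem integral_eq_add :
    ∫ x in (0 : ℝ)..1, G (-x) =
      (∫ x in (0 : ℝ)..1, (1 - F x) • G (-x)) + ∫ x in (0 : ℝ)..1, F x • G (-x) := by
  have hP : IntervalIntegrable (fun x => (1 - F x) • G (-x)) volume 0 1 :=
    (intervalIntegrable_iff_integrableOn_Ioc_of_le zero_le_one).mpr
      (hint.mono_set Ioc_subset_Ioi_self)
  have hQ : IntervalIntegrable (fun x => F x • G (-x)) volume 0 1 :=
    (intervalIntegrable_iff_integrableOn_Ioo_of_le zero_le_one).mpr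
      (hG.integrableOn_smul hF hint)
  simp only [← intervalIntegral.integral_add hP hQ, ← add_smul, sub_add_cancel, one_smul]

end SatisfiesThreeTermEquation

theorem eigenfunction_integral_identity_general [CompleteSpace E]
    (hF : IsQuestionMarkDistribution F)
    (hG : SatisfiesThreeTermEquation lam G) (hlam : lam ≠ -1)
    (hint : IntegrableOn (fun x => (1 - F x) • G (-x)) (Ioi 0)) :
    (lam / (lam + 1)) • ∫ x in (0 : ℝ)..1, G (-x) = ∫ x in (0 : ℝ)..1, F x • G (-x) := by
  have hlam' : lam + 1 ≠ 0 := fun h => hlam (eq_neg_of_add_eq_zero_left h)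
  have hPQ := hG.smul_integral_one_sub_smul hF hint
  calc (lam / (lam + 1)) • ∫ x in (0 : ℝ)..1, G (-x)
      = (lam / (lam + 1)) • (lam + 1) • ∫ x in (0 : ℝ)..1, (1 - F x) • G (-x) := by
        rw [hG.integral_eq_add hF hint, ← hPQ, add_smul lam, one_smul, add_comm (lam • _)]
    _ = ∫ x in (0 : ℝ)..1, F x • G (-x) := by rw [smul_smul, div_mul_cancel₀ _ hlam', hPQ]

end ThreeTermEquation

/-- For an eigenfunction G_λ of the transfer operator (continuous and bounded on
    (-∞,0], satisfying 2G_λ(z+1) = G_λ(z) + (1/(λz²))G_λ(1/z) for z < 0),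
    one has (λ/(λ+1))∫₀¹ G_λ(-x) dx = ∫₀¹ G_λ(-x) F(x) dx. -/
theorem eigenfunction_integral_identity
    (F : ℝ → ℝ) (hm : Monotone F) (hc : Continuous F)
    (hneg : ∀ x : ℝ, x ≤ 0 → F x = 0)
    (h1 : ∀ x : ℝ, 1 ≤ x → 2 * F x = F (x - 1) + 1)
    (h2 : ∀ x : ℝ, 0 ≤ x → x < 1 → 2 * F x = F (x / (1 - x)))
    (hlim : Tendsto F atTop (nhds 1))
    (lam : ℝ) (hlam0 : lam ≠ 0) (hlam1 : lam ≠ -1)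
    (G : ℝ → ℂ) (hGc : ContinuousOn G (Iic 0))
    (hGb : ∃ C : ℝ, ∀ z : ℝ, z ≤ 0 → ‖G z‖ ≤ C)
    (hGe : ∀ z : ℝ, z < 0 →
      2 * G (z + 1) = G z + ((1 / (lam * z ^ 2) : ℝ) : ℂ) * G (1 / z)) :
    ((lam / (lam + 1) : ℝ) : ℂ) * ∫ x in (0:ℝ)..1, G (-x) =
      ∫ x in (0:ℝ)..1, G (-x) * (F x : ℂ) := by
  obtain ⟨C, hC⟩ := hGb
  have hF : IsQuestionMarkDistribution F := ⟨hm.monotoneOn _, h1, h2⟩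
  have hG : SatisfiesThreeTermEquation lam G :=
    (satisfiesThreeTermEquation_iff_of_ne_zero hlam0).mpr fun z hz => by
      simpa [mul_assoc, mul_left_comm] using hGe z hz
  simpa only [Complex.real_smul, mul_comm] using
    eigenfunction_integral_identity_general hF hG hlam1 (hF.integrableOn_one_sub_smul hGc hC)
end
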